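/- Assume k is algebraically closed. Let E be a θ-stable representation of the quiver Q over k. Then every endomorphism of representations f : E → E is a homothety: there exists a scalar c ∈ k such that f_i = c · id_{E_i} for every vertex i ∈ Q₀. In particular the endomorphism algebra of E is isomorphic to k. -/

import Mathlib

/-!
The kernel and the image of an endomorphism of a `θ`-stable representation `E` are
subrepresentations, hence of nonnegative weight, and by rank-nullity their weights add up to the
weight of `E`, which is zero. So both weights vanish and stability leaves only two cases: the
endomorphism is zero or bijective. If `c` is an eigenvalue of `f` at some vertex, then `f - c • id`
is an endomorphism which is not injective at that vertex, so it is zero.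
-/

namespace QuiverRep

section Morphisms

variable {R : Type*} [Semiring R] {Q₀ Q₁ : Type*} {t h : Q₁ → Q₀} {E F : Q₀ → Type*}
  [∀ i, AddCommMonoid (E i)] [∀ i, Module R (E i)]
  [∀ i, AddCommMonoid (F i)] [∀ i, Module R (F i)]
  {φ : ∀ a, E (t a) →ₗ[R] E (h a)} {ψ : ∀ a, F (t a) →ₗ[R] F (h a)}

/-- The family of submodules `E'` is a subrepresentation of the representation with structure
maps `φ`. -/
def IsSubrep (φ : ∀ a, E (t a) →ₗ[R] E (h a)) (E' : ∀ i, Submodule R (E i)) : Prop :=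
  ∀ a, (E' (t a)).map (φ a) ≤ E' (h a)

/-- The family of linear maps `f` is a morphism from the representation with structure maps `φ`
to the representation with structure maps `ψ`. -/
def IsHom (φ : ∀ a, E (t a) →ₗ[R] E (h a)) (ψ : ∀ a, F (t a) →ₗ[R] F (h a))
    (f : ∀ i, E i →ₗ[R] F i) : Prop :=
  ∀ a, f (h a) ∘ₗ φ a = ψ a ∘ₗ f (t a)

namespace IsHom

variable {f : ∀ i, E i →ₗ[R] F i}

theorem apply_apply (hf : IsHom φ ψ f) (a : Q₁) (x : E (t a)) :
    f (h a) (φ a x) = ψ a (f (t a) x) :=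
  LinearMap.congr_fun (hf a) x

theorem isSubrep_ker (hf : IsHom φ ψ f) : IsSubrep φ fun i => (f i).ker := by
  rintro a _ ⟨x, hx, rfl⟩
  rw [LinearMap.mem_ker, hf.apply_apply, LinearMap.mem_ker.mp hx, map_zero]

theorem isSubrep_range (hf : IsHom φ ψ f) : IsSubrep ψ fun i => (f i).range := by
  rintro a _ ⟨_, ⟨x, rfl⟩, rfl⟩
  exact ⟨φ a x, hf.apply_apply a x⟩

end IsHom

end Morphisms

theorem IsHom.sub {R : Type*} [Semiring R] {Q₀ Q₁ : Type*} {t h : Q₁ → Q₀} {E F : Q₀ → Type*}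
    [∀ i, AddCommMonoid (E i)] [∀ i, Module R (E i)]
    [∀ i, AddCommGroup (F i)] [∀ i, Module R (F i)]
    {φ : ∀ a, E (t a) →ₗ[R] E (h a)} {ψ : ∀ a, F (t a) →ₗ[R] F (h a)}
    {f g : ∀ i, E i →ₗ[R] F i} (hf : IsHom φ ψ f) (hg : IsHom φ ψ g) :
    IsHom φ ψ fun i => f i - g i := fun a => by
  rw [LinearMap.sub_comp, LinearMap.comp_sub, hf a, hg a]

theorem isHom_smul_id {R : Type*} [CommSemiring R] {Q₀ Q₁ : Type*} {t h : Q₁ → Q₀}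
    {E : Q₀ → Type*} [∀ i, AddCommMonoid (E i)] [∀ i, Module R (E i)]
    (φ : ∀ a, E (t a) →ₗ[R] E (h a)) (c : R) :
    IsHom φ φ fun _ => c • LinearMap.id := fun a => by
  rw [LinearMap.smul_comp, LinearMap.comp_smul, LinearMap.id_comp, LinearMap.comp_id]

section Weight

variable {k : Type*} [DivisionRing k] {Q₀ Q₁ : Type*} [Fintype Q₀] {t h : Q₁ → Q₀}
  {E F : Q₀ → Type*}
  [∀ i, AddCommGroup (E i)] [∀ i, Module k (E i)]
  [∀ i, AddCommGroup (F i)] [∀ i, Module k (F i)]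
  {Γ : Type*} [AddCommMonoid Γ] {θ : Q₀ → Γ}

/-- The `θ`-weight `∑ i, θ i * dim (E' i)` of a family of subspaces. The weights `θ` may take
values in any additive monoid, so the product is written as a natural multiple. The weight of a
representation itself is that of the family `⊤`. -/
noncomputable def weight (θ : Q₀ → Γ) (E' : ∀ i, Submodule k (E i)) : Γ :=
  ∑ i, Module.finrank k (E' i) • θ i

theorem weight_bot (θ : Q₀ → Γ) : weight θ (⊥ : ∀ i, Submodule k (E i)) = 0 := by
  simp [weight]

theorem weight_ker_add_weight_range [∀ i, FiniteDimensional k (E i)] (θ : Q₀ → Γ)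
    (f : ∀ i, E i →ₗ[k] F i) :
    weight θ (fun i => (f i).ker) + weight θ (fun i => (f i).range) =
      weight θ (⊤ : ∀ i, Submodule k (E i)) := by
  simp only [weight, ← Finset.sum_add_distrib, ← add_smul, Pi.top_apply, finrank_top,
    add_comm (Module.finrank k (f _).ker), LinearMap.finrank_range_add_finrank_ker]

/-- `θ`-stability of the representation with structure maps `φ`. The zero representation
satisfies this condition. -/
structure IsStable [Preorder Γ] (θ : Q₀ → Γ) (φ : ∀ a, E (t a) →ₗ[k] E (h a)) : Prop where
  weight_top : weight θ (⊤ : ∀ i, Submodule k (E i)) = 0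
  weight_pos (E' : ∀ i, Submodule k (E i)) : IsSubrep φ E' → E' ≠ ⊥ → E' ≠ ⊤ → 0 < weight θ E'

namespace IsStable

theorem weight_nonneg [Preorder Γ] {φ : ∀ a, E (t a) →ₗ[k] E (h a)} (hφ : IsStable θ φ)
    {E' : ∀ i, Submodule k (E i)} (hE' : IsSubrep φ E') : 0 ≤ weight θ E' := by
  rcases eq_or_ne E' ⊥ with rfl | h_bot
  · exact (weight_bot θ).ge
  rcases eq_or_ne E' ⊤ with rfl | h_top
  · exact hφ.weight_top.ge
  exact (hφ.weight_pos E' hE' h_bot h_top).le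

theorem eq_bot_or_eq_top_of_weight_eq_zero [Preorder Γ] {φ : ∀ a, E (t a) →ₗ[k] E (h a)}
    (hφ : IsStable θ φ) {E' : ∀ i, Submodule k (E i)} (hE' : IsSubrep φ E')
    (h_weight : weight θ E' = 0) : E' = ⊥ ∨ E' = ⊤ := by
  by_contra! h_ne
  exact (hφ.weight_pos E' hE' h_ne.1 h_ne.2).ne' h_weight

theorem eq_zero_or_bijective [PartialOrder Γ] [IsOrderedAddMonoid Γ]
    [∀ i, FiniteDimensional k (E i)] {φ : ∀ a, E (t a) →ₗ[k] E (h a)}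
    {ψ : ∀ a, F (t a) →ₗ[k] F (h a)} (hφ : IsStable θ φ) (hψ : IsStable θ ψ)
    {f : ∀ i, E i →ₗ[k] F i} (hf : IsHom φ ψ f) :
    (∀ i, f i = 0) ∨ ∀ i, Function.Bijective (f i) := by
  obtain ⟨h_ker, h_range⟩ : weight θ (fun i => (f i).ker) = 0 ∧
      weight θ (fun i => (f i).range) = 0 := by
    rw [← add_eq_zero_iff_of_nonneg (hφ.weight_nonneg hf.isSubrep_ker)
      (hψ.weight_nonneg hf.isSubrep_range), weight_ker_add_weight_range, hφ.weight_top]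
  rcases hφ.eq_bot_or_eq_top_of_weight_eq_zero hf.isSubrep_ker h_ker with ker_bot | ker_top
  · rcases hψ.eq_bot_or_eq_top_of_weight_eq_zero hf.isSubrep_range h_range with
      range_bot | range_top
    · exact .inl fun i => LinearMap.range_eq_bot.mp (congrFun range_bot i)
    · exact .inr fun i => ⟨LinearMap.ker_eq_bot.mp (congrFun ker_bot i),
        LinearMap.range_eq_top.mp (congrFun range_top i)⟩
  · exact .inl fun i => LinearMap.ker_eq_top.mp (congrFun ker_top i)

end IsStable

end Weight

theorem IsStable.eq_smul_id_of_hasEigenvalue {k : Type*} [Field k] {Q₀ Q₁ : Type*} [Fintype Q₀]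
    {t h : Q₁ → Q₀} {E : Q₀ → Type*} [∀ i, AddCommGroup (E i)] [∀ i, Module k (E i)]
    [∀ i, FiniteDimensional k (E i)] {Γ : Type*} [AddCommMonoid Γ] [PartialOrder Γ]
    [IsOrderedAddMonoid Γ] {θ : Q₀ → Γ} {φ : ∀ a, E (t a) →ₗ[k] E (h a)} (hφ : IsStable θ φ)
    {f : ∀ i, E i →ₗ[k] E i} (hf : IsHom φ φ f) {j : Q₀} {c : k}
    (hc : Module.End.HasEigenvalue (f j) c) (i : Q₀) : f i = c • LinearMap.id := by
  rcases hφ.eq_zero_or_bijective hφ (hf.sub (isHom_smul_id φ c)) with h_zero | h_bij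
  · exact sub_eq_zero.mp (h_zero i)
  · obtain ⟨v, hv⟩ := hc.exists_hasEigenvector
    have h_ker : (f j - c • (LinearMap.id : E j →ₗ[k] E j)) v = 0 :=
      sub_eq_zero.mpr hv.apply_eq_smul
    exact absurd ((map_eq_zero_iff _ (h_bij j).injective).mp h_ker) hv.2

end QuiverRep

theorem endomorphism_of_stable_rep_is_homothety_general {k : Type*} [Field k] [IsAlgClosed k]
    {Q₀ Q₁ : Type*} [Fintype Q₀] {t h : Q₁ → Q₀} {Γ : Type*} [AddCommMonoid Γ] [PartialOrder Γ]
    [IsOrderedAddMonoid Γ] {θ : Q₀ → Γ} {E : Q₀ → Type*} [∀ i, AddCommGroup (E i)]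
    [∀ i, Module k (E i)] [∀ i, FiniteDimensional k (E i)] {φ : ∀ a, E (t a) →ₗ[k] E (h a)}
    (hφ : QuiverRep.IsStable θ φ) {f : ∀ i, E i →ₗ[k] E i} (hf : QuiverRep.IsHom φ φ f) :
    ∃ c : k, ∀ i, f i = c • LinearMap.id := by
  by_cases hE : ∀ i, Subsingleton (E i)
  · exact ⟨0, fun i => LinearMap.ext fun _ => Subsingleton.elim _ _⟩
  · obtain ⟨j, hj⟩ := not_forall.mp hE
    have : Nontrivial (E j) := not_subsingleton_iff_nontrivial.mp hj
    obtain ⟨c, hc⟩ := Module.End.exists_eigenvalue (f j)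
    exact ⟨c, hφ.eq_smul_id_of_hasEigenvalue hf hc⟩

/-- Over an algebraically closed field `k`, every endomorphism of a
θ-stable representation `E` of a quiver `Q` is a homothety: there is `c : k` with
`f i = c • id` at every vertex `i`. In particular `End(E) ≅ k`. -/
theorem endomorphism_of_stable_rep_is_homothety
    {k : Type*} [Field k] [IsAlgClosed k] {Q0 Q1 : Type*} [Fintype Q0] [Fintype Q1]
    (t h : Q1 → Q0) (θ : Q0 → ℝ)
    (E : Q0 → Type*) [∀ i, AddCommGroup (E i)] [∀ i, Module k (E i)]
    [∀ i, FiniteDimensional k (E i)]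
    (φ : ∀ a : Q1, E (t a) →ₗ[k] E (h a))
    (hEsum : ∑ i : Q0, θ i * (Module.finrank k (E i) : ℝ) = 0)
    (hEstable : ∀ E' : ∀ i : Q0, Submodule k (E i),
      (∀ a : Q1, (E' (t a)).map (φ a) ≤ E' (h a)) →
      E' ≠ (fun _ => ⊥) → E' ≠ (fun _ => ⊤) →
      0 < ∑ i : Q0, θ i * (Module.finrank k (E' i) : ℝ))
    (f : ∀ i : Q0, E i →ₗ[k] E i)
    (hf : ∀ a : Q1, (f (h a)).comp (φ a) = (φ a).comp (f (t a))) :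
    ∃ c : k, ∀ i : Q0, f i = c • LinearMap.id := by
  exact endomorphism_of_stable_rep_is_homothety_general (θ := θ)
    ⟨by simpa [QuiverRep.weight, mul_comm] using hEsum, fun E' h_sub h_bot h_top => by
      simpa only [QuiverRep.weight, nsmul_eq_mul, mul_comm] using hEstable E' h_sub h_bot h_top⟩ hf
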